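/- (a) For n ≥ 3: E(𝒯_A³) = (n/((n−1)(n−2))) · Σ_{i,j=1}^{n} â_{ij}³. (b) For n ≥ 4: E(𝒯_A⁴) = 3·(n²−3n+1)(n−1)/(n(n−2)(n−3)) − (3/((n−2)(n−3)))·Σ_{i,j,k=1}^{n}(â_{ij}²â_{ik}² + â_{ij}²â_{kj}²) + (n(n+1)/((n−1)(n−2)(n−3)))·Σ_{i,j=1}^{n} â_{ij}⁴ + (6/(n(n−1)(n−2)(n−3)))·Σ_{i,j,k,h=1}^{n} â_{ik}â_{ih}â_{jk}â_{jh}. -/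

import Mathlib

open Finset MeasureTheory

/-- Density of the standard normal distribution. -/
noncomputable def gaussD (x : ℝ) : ℝ := (Real.sqrt (2 * Real.pi))⁻¹ * Real.exp (-(x ^ 2) / 2)

/-- Distribution function of the standard normal distribution. -/
noncomputable def gaussCDF (x : ℝ) : ℝ := ∫ t in Set.Iic x, gaussD t

section RankDefs

variable {m : ℕ}

/-- Row mean `a_{i·}`. -/
noncomputable def rowMean (A : Matrix (Fin m) (Fin m) ℝ) (i : Fin m) : ℝ := (∑ j, A i j) / (m : ℝ)

/-- Column mean `a_{·j}`. -/
noncomputable def colMean (A : Matrix (Fin m) (Fin m) ℝ) (j : Fin m) : ℝ := (∑ i, A i j) / (m : ℝ)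

/-- Grand mean `a_{··}`. -/
noncomputable def totMean (A : Matrix (Fin m) (Fin m) ℝ) : ℝ := (∑ i, ∑ j, A i j) / (m : ℝ) ^ 2

/-- Centered entries `a_{ij} − a_{i·} − a_{·j} + a_{··}`. -/
noncomputable def ctr (A : Matrix (Fin m) (Fin m) ℝ) (i j : Fin m) : ℝ :=
  A i j - rowMean A i - colMean A j + totMean A

/-- `σ_A²`. -/
noncomputable def sigma2 (A : Matrix (Fin m) (Fin m) ℝ) : ℝ :=
  (∑ i, ∑ j, ctr A i j ^ 2) / ((m : ℝ) - 1)

/-- `σ_A`. -/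
noncomputable def sdev (A : Matrix (Fin m) (Fin m) ℝ) : ℝ := Real.sqrt (sigma2 A)

/-- Standardized matrix `Â = (â_{ij})`. -/
noncomputable def hatM (A : Matrix (Fin m) (Fin m) ℝ) : Matrix (Fin m) (Fin m) ℝ :=
  fun i j => ctr A i j / sdev A

/-- `μ_A = n·a_{··}`. -/
noncomputable def muM (A : Matrix (Fin m) (Fin m) ℝ) : ℝ := (m : ℝ) * totMean A

/-- The linear rank statistic `T_A(π) = Σ_i a_{iπ(i)}`. -/
noncomputable def rankT (A : Matrix (Fin m) (Fin m) ℝ) (π : Equiv.Perm (Fin m)) : ℝ :=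
  ∑ i, A i (π i)

/-- Expectation with respect to the uniform distribution on permutations. -/
noncomputable def permExp (f : Equiv.Perm (Fin m) → ℝ) : ℝ :=
  (∑ π : Equiv.Perm (Fin m), f π) / (Nat.factorial m : ℝ)

/-- The standardized rank statistic `𝒯_A = (T_A − μ_A)/σ_A`. -/
noncomputable def rankTstd (A : Matrix (Fin m) (Fin m) ℝ) (π : Equiv.Perm (Fin m)) : ℝ :=
  (rankT A π - muM A) / sdev A

/-- `F_A`, the distribution function of `T_A`. -/
noncomputable def Fr (A : Matrix (Fin m) (Fin m) ℝ) (z : ℝ) : ℝ :=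
  permExp (fun π => if rankT A π ≤ z then (1 : ℝ) else 0)

/-- `ℱ_A`, the distribution function of `𝒯_A`. -/
noncomputable def Fstd (A : Matrix (Fin m) (Fin m) ℝ) (z : ℝ) : ℝ :=
  permExp (fun π => if rankTstd A π ≤ z then (1 : ℝ) else 0)

/-- `β_A = Σ_{i,j} |â_{ij}|³`. -/
noncomputable def betaM (A : Matrix (Fin m) (Fin m) ℝ) : ℝ := ∑ i, ∑ j, |hatM A i j| ^ 3

/-- `δ_A = Σ_{i,j} |â_{ij}|⁴`. -/
noncomputable def deltaM (A : Matrix (Fin m) (Fin m) ℝ) : ℝ := ∑ i, ∑ j, |hatM A i j| ^ 4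

/-- `η_A = Σ_{i,j} |â_{ij}|⁵`. -/
noncomputable def etaM (A : Matrix (Fin m) (Fin m) ℝ) : ℝ := ∑ i, ∑ j, |hatM A i j| ^ 5

/-- `D_A = (δ_A/n)^{1/2}`. -/
noncomputable def DM (A : Matrix (Fin m) (Fin m) ℝ) : ℝ := Real.sqrt (deltaM A / (m : ℝ))

/-- `E_A = (η_A/n)^{1/3}`. -/
noncomputable def EM (A : Matrix (Fin m) (Fin m) ℝ) : ℝ := (etaM A / (m : ℝ)) ^ ((1 : ℝ) / 3)

/-- `λ_{1,A} = (1/n)Σ_{i,j} â_{ij}³`. -/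
noncomputable def lam1 (A : Matrix (Fin m) (Fin m) ℝ) : ℝ := (∑ i, ∑ j, hatM A i j ^ 3) / (m : ℝ)

/-- `λ_{2,A}`. -/
noncomputable def lam2 (A : Matrix (Fin m) (Fin m) ℝ) : ℝ :=
  (∑ i, ∑ j, hatM A i j ^ 4) / (m : ℝ) + 3 / (m : ℝ)
    - 3 / (m : ℝ) ^ 2 *
        ∑ i, ∑ j, ∑ k, (hatM A i j ^ 2 * hatM A i k ^ 2 + hatM A i j ^ 2 * hatM A k j ^ 2)

/-- First-order Edgeworth expansion `e_{1,A}`. -/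
noncomputable def edge1 (A : Matrix (Fin m) (Fin m) ℝ) (x : ℝ) : ℝ :=
  gaussCDF x - gaussD x * (lam1 A / 6) * (x ^ 2 - 1)

/-- Second-order Edgeworth expansion `e_{2,A}`. -/
noncomputable def edge2 (A : Matrix (Fin m) (Fin m) ℝ) (x : ℝ) : ℝ :=
  gaussCDF x - gaussD x *
    (lam1 A / 6 * (x ^ 2 - 1) + lam2 A / 24 * (x ^ 3 - 3 * x)
      + lam1 A ^ 2 / 72 * (x ^ 5 - 10 * x ^ 3 + 15 * x))

/-- `k`-th iterated difference `Δ_y^k G`. -/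
noncomputable def Δiter (y : ℝ) (k : ℕ) (G : ℝ → ℝ) : ℝ → ℝ :=
  (fun (G : ℝ → ℝ) (z : ℝ) => G (z + y) - G z)^[k] G

/-- The interpolating polynomial `P_y^k(x; z, F)` of `F` at the points `z, z+y, …, z+ky`. -/
noncomputable def interp (y : ℝ) (k : ℕ) (z : ℝ) (F : ℝ → ℝ) (x : ℝ) : ℝ :=
  F z + ∑ s ∈ Finset.Icc 1 k,
    Δiter y s F z * ∏ i ∈ Finset.Icc 1 s, (x - z - ((i : ℝ) - 1) * y) / ((i : ℝ) * y)

end RankDefs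

/-!
Expanding the power `(∑ i, a i (π i)) ^ p` yields sums over tuples of distinct rows. A uniform
permutation sends a fixed `k`-tuple of distinct rows to a uniform `k`-tuple of distinct columns, so
the expectation of such a sum is a sum over placements of `k` non-attacking rooks, divided by
`n (n - 1) ⋯ (n - k + 1)`. If `a` is doubly centred, a rook entering the summand only through the
factor `a (x 0) (y 0)` can be removed: summing over its row and then over its column gives
`∑ s, ∑ t, a (x s) (y t)`, taken over the remaining rooks, with the two signs cancelling. Iterating
this leaves only sums in which the rows and columns range freely. This applies to `hatM A`.
-/

section EmbeddingSums

variable {ι M R : Type*} [Fintype ι] {k : ℕ}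

theorem sum_embedding_comp_perm {κ : Type*} [Fintype κ] [AddCommMonoid M] (σ : Equiv.Perm κ)
    (F : (κ → ι) → M) : ∑ e : κ ↪ ι, F (e ∘ σ) = ∑ e : κ ↪ ι, F e :=
  Fintype.sum_equiv (σ.symm.embeddingCongr (Equiv.refl ι)) _ _ fun _ ↦ rfl

theorem sum_embedding_succ [AddCommGroup M] (F : (Fin k → ι) → ι → M) :
    ∑ e : Fin (k + 1) ↪ ι, F (e ∘ Fin.succ) (e 0) =
      ∑ e : Fin k ↪ ι, (∑ i, F e i - ∑ s, F e (e s)) := by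
  classical
  calc ∑ e : Fin (k + 1) ↪ ι, F (e ∘ Fin.succ) (e 0)
      = ∑ p : (Σ e : Fin k ↪ ι, {i // i ∉ Set.range e}), F p.1 p.2 :=
        Fintype.sum_equiv (Equiv.embeddingFinSucc k ι) _ _ fun _ ↦ rfl
    _ = ∑ e : Fin k ↪ ι, ∑ i : {i // i ∉ Set.range e}, F e i := Fintype.sum_sigma _
    _ = ∑ e : Fin k ↪ ι, (∑ i, F e i - ∑ s, F e (e s)) := by
      refine sum_congr rfl fun e _ ↦ ?_
      rw [← sum_subtype (univ.map e)ᶜ (by simp) (F e), eq_sub_iff_add_eq', ← sum_map,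
        sum_add_sum_compl]

theorem sum_embedding_one [AddCommGroup M] (f : ι → M) :
    ∑ e : Fin 1 ↪ ι, f (e 0) = ∑ i, f i := by
  simpa using sum_embedding_succ (k := 0) fun _ i ↦ f i

theorem sum_embedding_two [AddCommGroup M] (F : ι → ι → M) :
    ∑ e : Fin 2 ↪ ι, F (e 0) (e 1) = ∑ i, ∑ j, F i j - ∑ i, F i i := by
  calc ∑ e : Fin 2 ↪ ι, F (e 0) (e 1)
      = ∑ e : Fin 1 ↪ ι, (∑ i, F i (e 0) - ∑ s, F (e s) (e 0)) :=
        sum_embedding_succ fun x i ↦ F i (x 0)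
    _ = ∑ j, (∑ i, F i j - F j j) := by
        simp only [univ_unique, sum_singleton, Fin.default_eq_zero]
        exact sum_embedding_one fun j ↦ ∑ i, F i j - F j j
    _ = ∑ i, ∑ j, F i j - ∑ i, F i i := by rw [sum_sub_distrib, sum_comm]

variable [CommRing R]

theorem sum_embedding_mul_sum (F : (Fin k → ι) → R) (f : ι → R) :
    (∑ e : Fin k ↪ ι, F e) * ∑ i, f i =
      ∑ e : Fin k ↪ ι, F e * ∑ s, f (e s) +
        ∑ e : Fin (k + 1) ↪ ι, F (e ∘ Fin.succ) * f (e 0) := by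
  rw [sum_embedding_succ fun x i ↦ F x * f i]
  simp only [sum_mul, ← mul_sum, sum_sub_distrib, add_sub_cancel]

theorem sum_embedding_succ_mul_of_sum_eq_zero (F : (Fin k → ι) → R) {v : ι → R}
    (hv : ∑ i, v i = 0) :
    ∑ e : Fin (k + 1) ↪ ι, F (e ∘ Fin.succ) * v (e 0) =
      -∑ e : Fin k ↪ ι, F e * ∑ s, v (e s) := by
  have h := sum_embedding_mul_sum F v
  rw [hv, mul_zero] at h
  exact (neg_eq_of_add_eq_zero_right h.symm).symm

theorem sum_embedding_prod_mul_sum (f : ι → R) (s : Fin k) :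
    (∑ e : Fin k ↪ ι, ∏ r, f (e r)) * ∑ i, f i =
      k * ∑ e : Fin k ↪ ι, (∏ r, f (e r)) * f (e s) +
        ∑ e : Fin (k + 1) ↪ ι, ∏ r, f (e r) := by
  have h_symm (t : Fin k) : ∑ e : Fin k ↪ ι, (∏ r, f (e r)) * f (e t) =
      ∑ e : Fin k ↪ ι, (∏ r, f (e r)) * f (e s) := by
    rw [← sum_embedding_comp_perm (Equiv.swap s t) fun x ↦ (∏ r, f (x r)) * f (x t)]
    refine sum_congr rfl fun e _ ↦ ?_
    rw [Function.comp_apply, Equiv.swap_apply_right]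
    exact congrArg (· * f (e s)) (Equiv.prod_comp (Equiv.swap s t) fun r ↦ f (e r))
  rw [sum_embedding_mul_sum fun x ↦ ∏ r, f (x r)]
  congr 1
  · simp only [mul_sum (univ : Finset (Fin k))]
    rw [sum_comm]
    simp only [h_symm, sum_const, card_univ, Fintype.card_fin, nsmul_eq_mul]
  · simp only [Fin.prod_univ_succ, Function.comp_apply, mul_comm]

theorem sum_pow_mul_sum (p : ℕ) (f : ι → R) :
    (∑ i, f i ^ p) * ∑ i, f i = ∑ i, f i ^ (p + 1) + ∑ e : Fin 2 ↪ ι, f (e 1) ^ p * f (e 0) := by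
  rw [sum_embedding_two fun i j ↦ f j ^ p * f i, sum_comm, sum_mul_sum]
  simp only [pow_succ, add_sub_cancel]

theorem sum_pow_three_eq_sum_embedding (f : ι → R) :
    (∑ i, f i) ^ 3 = ∑ i, f i ^ 3 + 3 * ∑ e : Fin 2 ↪ ι, f (e 1) ^ 2 * f (e 0) +
      ∑ e : Fin 3 ↪ ι, ∏ r, f (e r) := by
  have h_one : (∑ i, f i) * ∑ i, f i = ∑ i, f i ^ 2 + ∑ e : Fin 2 ↪ ι, ∏ r, f (e r) := by
    have h := sum_embedding_prod_mul_sum f (0 : Fin 1)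
    simp only [Fin.prod_univ_one, sum_embedding_one f, Nat.cast_one, one_mul, ← sq] at h
    rw [← sq, h, sum_embedding_one fun i ↦ f i ^ 2]
  have h_two := sum_embedding_prod_mul_sum f (1 : Fin 2)
  have h_two' : ∑ e : Fin 2 ↪ ι, (∏ r, f (e r)) * f (e 1) =
      ∑ e : Fin 2 ↪ ι, f (e 1) ^ 2 * f (e 0) :=
    sum_congr rfl fun e _ ↦ by rw [Fin.prod_univ_two]; ring
  rw [pow_three', h_one, add_mul, h_two, h_two', sum_pow_mul_sum]
  ring

theorem sum_pow_four_eq_sum_embedding (f : ι → R) :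
    (∑ i, f i) ^ 4 = ∑ i, f i ^ 4 + 4 * ∑ e : Fin 2 ↪ ι, f (e 1) ^ 3 * f (e 0) +
      3 * ∑ e : Fin 2 ↪ ι, f (e 1) ^ 2 * f (e 0) ^ 2 +
      6 * ∑ e : Fin 3 ↪ ι, f (e 2) ^ 2 * f (e 1) * f (e 0) +
      ∑ e : Fin 4 ↪ ι, ∏ r, f (e r) := by
  have h_two : (∑ e : Fin 2 ↪ ι, f (e 1) ^ 2 * f (e 0)) * ∑ i, f i =
      ∑ e : Fin 2 ↪ ι, f (e 1) ^ 3 * f (e 0) + ∑ e : Fin 2 ↪ ι, f (e 1) ^ 2 * f (e 0) ^ 2 +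
        ∑ e : Fin 3 ↪ ι, f (e 2) ^ 2 * f (e 1) * f (e 0) := by
    rw [sum_embedding_mul_sum fun x ↦ f (x 1) ^ 2 * f (x 0), ← sum_add_distrib]
    exact congrArg (· + _) (sum_congr rfl fun e _ ↦ by rw [Fin.sum_univ_two]; ring)
  have h_three := sum_embedding_prod_mul_sum f (2 : Fin 3)
  have h_three' : ∑ e : Fin 3 ↪ ι, (∏ r, f (e r)) * f (e 2) =
      ∑ e : Fin 3 ↪ ι, f (e 2) ^ 2 * f (e 1) * f (e 0) :=
    sum_congr rfl fun e _ ↦ by rw [Fin.prod_univ_three]; ring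
  rw [pow_succ, sum_pow_three_eq_sum_embedding, add_mul, add_mul, mul_assoc 3, h_two, h_three,
    h_three', sum_pow_mul_sum]
  ring

end EmbeddingSums

theorem card_smul_sum_smul {G X M : Type*} [Group G] [Fintype G] [Fintype X] [MulAction G X]
    [MulAction.IsPretransitive G X] [AddCommMonoid M] (F : X → M) (x : X) :
    Fintype.card X • ∑ g : G, F (g • x) = Fintype.card G • ∑ y, F y := by
  have h_const (y : X) : ∑ g : G, F (g • y) = ∑ g : G, F (g • x) := by
    obtain ⟨h, rfl⟩ := MulAction.exists_smul_eq G x y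
    simp only [smul_smul]
    exact Equiv.sum_comp (Equiv.mulRight h) fun g ↦ F (g • x)
  calc Fintype.card X • ∑ g : G, F (g • x)
      = ∑ y, ∑ g : G, F (g • y) := by simp only [h_const, sum_const, card_univ]
    _ = ∑ g : G, ∑ y, F (g • y) := sum_comm
    _ = ∑ _g : G, ∑ y, F y := sum_congr rfl fun g _ ↦ Equiv.sum_comp (MulAction.toPerm g) F
    _ = Fintype.card G • ∑ y, F y := by rw [sum_const, card_univ]

/-- The sum of `G x y` over all ordered placements of `k` non-attacking rooks on the board `ι × κ`,
that is, over distinct rows `x 0, …, x (k - 1)` and distinct columns `y 0, …, y (k - 1)`. -/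
noncomputable def rookSum {ι κ R : Type*} [Fintype ι] [Fintype κ] [AddCommMonoid R] {k : ℕ}
    (G : (Fin k → ι) → (Fin k → κ) → R) : R :=
  ∑ e : Fin k ↪ ι, ∑ f : Fin k ↪ κ, G e f

section RookSum

variable {ι κ M R : Type*} [Fintype ι] [Fintype κ] {k : ℕ}

section AddCommMonoid

variable [AddCommMonoid M]

theorem rookSum_add (F G : (Fin k → ι) → (Fin k → κ) → M) :
    rookSum (fun x y ↦ F x y + G x y) = rookSum F + rookSum G := by
  simp only [rookSum, sum_add_distrib]

theorem rookSum_sum {α : Type*} (s : Finset α) (G : α → (Fin k → ι) → (Fin k → κ) → M) :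
    rookSum (fun x y ↦ ∑ i ∈ s, G i x y) = ∑ i ∈ s, rookSum (G i) := by
  simp only [rookSum, sum_comm (t := s)]

theorem rookSum_flip (G : (Fin k → κ) → (Fin k → ι) → M) :
    rookSum (fun x y ↦ G y x) = rookSum G :=
  sum_comm

theorem rookSum_comp_perm (σ : Equiv.Perm (Fin k)) (G : (Fin k → ι) → (Fin k → κ) → M) :
    rookSum (fun x y ↦ G (x ∘ σ) (y ∘ σ)) = rookSum G := by
  simp only [rookSum]
  rw [sum_embedding_comp_perm σ fun x ↦ ∑ f : Fin k ↪ κ, G x (f ∘ σ)]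
  exact sum_congr rfl fun e _ ↦ sum_embedding_comp_perm σ (G e)

end AddCommMonoid

theorem rookSum_one [AddCommGroup M] (G : ι → κ → M) :
    rookSum (k := 1) (fun x y ↦ G (x 0) (y 0)) = ∑ i, ∑ j, G i j := by
  simp only [rookSum, fun i ↦ sum_embedding_one (G i), sum_embedding_one fun i ↦ ∑ j, G i j]

theorem rookSum_two [AddCommGroup M] (G : ι → ι → κ → κ → M) :
    rookSum (k := 2) (fun x y ↦ G (x 0) (x 1) (y 0) (y 1)) =
      ∑ i, ∑ i', ∑ j, ∑ j', G i i' j j' - ∑ i, ∑ i', ∑ j, G i i' j j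
        - ∑ i, ∑ j, ∑ j', G i i j j' + ∑ i, ∑ j, G i i j j := by
  simp only [rookSum, fun i i' ↦ sum_embedding_two (G i i')]
  rw [sum_embedding_two fun i i' ↦ ∑ j, ∑ j', G i i' j j' - ∑ j, G i i' j j]
  simp only [sum_sub_distrib]
  abel

variable [CommRing R]

theorem rookSum_prod_mul_apply_comp_perm (a : ι → κ → R) (σ : Equiv.Perm (Fin k))
    (s t : Fin k) :
    rookSum (fun x y ↦ (∏ r, a (x r) (y r)) * a (x (σ s)) (y (σ t))) =
      rookSum fun x y ↦ (∏ r, a (x r) (y r)) * a (x s) (y t) := by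
  rw [← rookSum_comp_perm σ fun x y ↦ (∏ r, a (x r) (y r)) * a (x s) (y t)]
  simp only [Function.comp_apply,
    fun (x : Fin k → ι) (y : Fin k → κ) ↦ Equiv.prod_comp σ fun r ↦ a (x r) (y r)]

theorem rookSum_prod_mul_sum_sum (a : ι → κ → R) {s t : Fin k} (hst : s ≠ t) :
    rookSum (k := k) (fun x y ↦ (∏ r, a (x r) (y r)) * ∑ u, ∑ v, a (x u) (y v)) =
      k * rookSum (k := k) (fun x y ↦ (∏ r, a (x r) (y r)) * a (x s) (y s)) +
        k * (k - 1) * rookSum (k := k) (fun x y ↦ (∏ r, a (x r) (y r)) * a (x s) (y t)) := by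
  have h_diag (u : Fin k) :
      rookSum (fun x y ↦ (∏ r, a (x r) (y r)) * a (x u) (y u)) =
        rookSum (fun x y ↦ (∏ r, a (x r) (y r)) * a (x s) (y s)) := by
    rw [← rookSum_prod_mul_apply_comp_perm a (Equiv.swap s u) s s, Equiv.swap_apply_left]
  have h_offDiag (u v : Fin k) (huv : u ≠ v) :
      rookSum (fun x y ↦ (∏ r, a (x r) (y r)) * a (x u) (y v)) =
        rookSum (fun x y ↦ (∏ r, a (x r) (y r)) * a (x s) (y t)) := by
    obtain ⟨σ, rfl, rfl⟩ := MulAction.is_two_pretransitive_iff.1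
      (Equiv.Perm.isMultiplyPretransitive (Fin k) 2) hst huv
    exact rookSum_prod_mul_apply_comp_perm a σ s t
  have h_row (u : Fin k) :
      ∑ v, rookSum (fun x y ↦ (∏ r, a (x r) (y r)) * a (x u) (y v)) =
        rookSum (fun x y ↦ (∏ r, a (x r) (y r)) * a (x s) (y s)) +
          (k - 1) * rookSum (fun x y ↦ (∏ r, a (x r) (y r)) * a (x s) (y t)) := by
    rw [← add_sum_erase univ _ (mem_univ u), h_diag,
      sum_congr rfl fun v hv ↦ h_offDiag u v (ne_of_mem_erase hv).symm, sum_const,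
      card_erase_of_mem (mem_univ u), card_univ, Fintype.card_fin, nsmul_eq_mul,
      Nat.cast_pred u.pos]
  simp only [mul_sum, rookSum_sum]
  simp only [h_row, sum_const, card_univ, Fintype.card_fin, nsmul_eq_mul]
  ring

theorem sum_sum_sum_mul_col (b : ι → κ → R) :
    ∑ i, ∑ i', ∑ j, b i' j * b i j = ∑ j, (∑ i, b i j) ^ 2 := by
  simp only [sum_comm (t := (univ : Finset κ)), sq, ← mul_sum, ← sum_mul]

theorem rookSum_sq_mul_sq (a : ι → κ → R) :
    rookSum (k := 2) (fun x y ↦ a (x 1) (y 1) ^ 2 * a (x 0) (y 0) ^ 2) =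
      (∑ i, ∑ j, a i j ^ 2) ^ 2 - ∑ i, (∑ j, a i j ^ 2) ^ 2 - ∑ j, (∑ i, a i j ^ 2) ^ 2 +
        ∑ i, ∑ j, a i j ^ 4 := by
  rw [rookSum_two fun i i' j j' ↦ a i' j' ^ 2 * a i j ^ 2,
    sub_right_comm _ (∑ i, (∑ j, a i j ^ 2) ^ 2), ← sum_sum_sum_mul_col fun i j ↦ a i j ^ 2]
  simp only [← mul_sum, ← sum_mul, ← pow_add, sq (∑ _, _)]

theorem rookSum_four_cycle (a : ι → κ → R) :
    rookSum (k := 2) (fun x y ↦ a (x 0) (y 0) * a (x 1) (y 1) * a (x 1) (y 0) * a (x 0) (y 1)) =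
      ∑ i, ∑ i', ∑ j, ∑ j', a i j * a i j' * a i' j * a i' j' - ∑ i, (∑ j, a i j ^ 2) ^ 2 -
        ∑ j, (∑ i, a i j ^ 2) ^ 2 + ∑ i, ∑ j, a i j ^ 4 := by
  have h_reorder (i i' : ι) (j j' : κ) :
      a i j * a i' j' * a i' j * a i j' = a i j * a i j' * a i' j * a i' j' := by ring
  have h_row (i : ι) (j j' : κ) :
      a i j * a i j' * a i j * a i j' = a i j ^ 2 * a i j' ^ 2 := by ring
  have h_col (i i' : ι) (j : κ) :
      a i j * a i' j * a i' j * a i j = a i' j ^ 2 * a i j ^ 2 := by ring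
  rw [rookSum_two fun i i' j j' ↦ a i j * a i' j' * a i' j * a i j',
    sub_right_comm _ (∑ i, (∑ j, a i j ^ 2) ^ 2), ← sum_sum_sum_mul_col fun i j ↦ a i j ^ 2]
  simp only [h_col, h_row, h_reorder, ← sum_mul_sum, sq (∑ _, _), ← pow_add]

/-- A doubly centred array: all row sums and all column sums vanish. This is what distinguishes the
standardized matrix `hatM A` in the moment computations. -/
structure IsDoublyCentered [AddCommMonoid M] (a : ι → κ → M) : Prop where
  row_sum (i : ι) : ∑ j, a i j = 0
  col_sum (j : κ) : ∑ i, a i j = 0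

namespace IsDoublyCentered

theorem flip [AddCommMonoid M] {a : ι → κ → M} (ha : IsDoublyCentered a) :
    IsDoublyCentered fun j i ↦ a i j :=
  ⟨ha.col_sum, ha.row_sum⟩

variable {a : ι → κ → R}

theorem rookSum_succ (ha : IsDoublyCentered a) (G : (Fin k → ι) → (Fin k → κ) → R) :
    rookSum (fun x y ↦ G (x ∘ Fin.succ) (y ∘ Fin.succ) * a (x 0) (y 0)) =
      rookSum fun x y ↦ G x y * ∑ s, ∑ t, a (x s) (y t) := by
  calc ∑ e : Fin (k + 1) ↪ ι, ∑ f : Fin (k + 1) ↪ κ,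
          G (e ∘ Fin.succ) (f ∘ Fin.succ) * a (e 0) (f 0)
      = ∑ f : Fin (k + 1) ↪ κ, -∑ e : Fin k ↪ ι, G e (f ∘ Fin.succ) * ∑ s, a (e s) (f 0) := by
        rw [sum_comm]
        exact sum_congr rfl fun f _ ↦ sum_embedding_succ_mul_of_sum_eq_zero
          (fun x ↦ G x (f ∘ Fin.succ)) (ha.col_sum (f 0))
    _ = -∑ e : Fin k ↪ ι, ∑ f : Fin (k + 1) ↪ κ, G e (f ∘ Fin.succ) * ∑ s, a (e s) (f 0) := by
        rw [sum_neg_distrib, sum_comm]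
    _ = ∑ e : Fin k ↪ ι, ∑ f : Fin k ↪ κ, G e f * ∑ s, ∑ t, a (e s) (f t) := by
        rw [← sum_neg_distrib]
        refine sum_congr rfl fun e _ ↦ ?_
        have h_zero : ∑ j, ∑ s, a (e s) j = 0 := by
          rw [sum_comm]; exact sum_eq_zero fun s _ ↦ ha.row_sum (e s)
        rw [sum_embedding_succ_mul_of_sum_eq_zero (G e) h_zero, neg_neg]
        exact sum_congr rfl fun f _ ↦ congrArg _ sum_comm

theorem rookSum_prod_succ (ha : IsDoublyCentered a) {s t : Fin k} (hst : s ≠ t) :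
    rookSum (k := k + 1) (fun x y ↦ ∏ r, a (x r) (y r)) =
      k * rookSum (k := k) (fun x y ↦ (∏ r, a (x r) (y r)) * a (x s) (y s)) +
        k * (k - 1) * rookSum (k := k) (fun x y ↦ (∏ r, a (x r) (y r)) * a (x s) (y t)) := by
  rw [← rookSum_prod_mul_sum_sum a hst, ← ha.rookSum_succ fun x y ↦ ∏ r, a (x r) (y r)]
  simp only [Fin.prod_univ_succ, Function.comp_apply, mul_comm]

theorem rookSum_pow_mul_pow_row_mul (ha : IsDoublyCentered a) (p q : ℕ) :
    rookSum (k := 2) (fun x y ↦ a (x 1) (y 1) ^ p * a (x 1) (y 0) ^ q * a (x 0) (y 0)) =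
      ∑ i, ∑ j, a i j ^ (p + q + 1) - ∑ i, (∑ j, a i j ^ p) * ∑ j, a i j ^ (q + 1) := by
  calc ∑ e : Fin 2 ↪ ι, ∑ f : Fin 2 ↪ κ,
          a (e 1) (f 1) ^ p * a (e 1) (f 0) ^ q * a (e 0) (f 0)
      = ∑ f : Fin 2 ↪ κ, -∑ i, a i (f 1) ^ p * a i (f 0) ^ (q + 1) := by
        rw [sum_comm]
        refine sum_congr rfl fun f _ ↦ (sum_embedding_succ_mul_of_sum_eq_zero
          (fun x : Fin 1 → ι ↦ a (x 0) (f 1) ^ p * a (x 0) (f 0) ^ q)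
          (ha.col_sum (f 0))).trans ?_
        simp only [univ_unique, sum_singleton, Fin.default_eq_zero, mul_assoc, ← pow_succ]
        rw [sum_embedding_one fun i ↦ a i (f 1) ^ p * a i (f 0) ^ (q + 1)]
    _ = -∑ i, ∑ f : Fin 2 ↪ κ, a i (f 1) ^ p * a i (f 0) ^ (q + 1) := by
        rw [sum_neg_distrib, sum_comm]
    _ = ∑ i, ∑ j, a i j ^ (p + q + 1) - ∑ i, (∑ j, a i j ^ p) * ∑ j, a i j ^ (q + 1) := by
        simp only [fun i ↦ sum_embedding_two fun j j' ↦ a i j' ^ p * a i j ^ (q + 1),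
          ← mul_sum, ← sum_mul, ← pow_add, ← add_assoc, sum_sub_distrib, neg_sub]

theorem rookSum_pow_mul_pow_col_mul (ha : IsDoublyCentered a) (p q : ℕ) :
    rookSum (k := 2) (fun x y ↦ a (x 1) (y 1) ^ p * a (x 0) (y 1) ^ q * a (x 0) (y 0)) =
      ∑ i, ∑ j, a i j ^ (p + q + 1) - ∑ j, (∑ i, a i j ^ p) * ∑ i, a i j ^ (q + 1) := by
  rw [← rookSum_flip, sum_comm]
  exact ha.flip.rookSum_pow_mul_pow_row_mul p q

theorem rookSum_pow_mul (ha : IsDoublyCentered a) (p : ℕ) :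
    rookSum (k := 2) (fun x y ↦ a (x 1) (y 1) ^ p * a (x 0) (y 0)) =
      ∑ i, ∑ j, a i j ^ (p + 1) := by
  simpa [ha.row_sum] using ha.rookSum_pow_mul_pow_row_mul p 0

theorem rookSum_mul_pow_mul (ha : IsDoublyCentered a) (q : ℕ) :
    rookSum (k := 2) (fun x y ↦ a (x 1) (y 1) * a (x 1) (y 0) ^ q * a (x 0) (y 0)) =
      ∑ i, ∑ j, a i j ^ (q + 2) := by
  simpa [ha.row_sum, add_comm 1 q] using ha.rookSum_pow_mul_pow_row_mul 1 q

theorem rookSum_prod_three (ha : IsDoublyCentered a) :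
    rookSum (k := 3) (fun x y ↦ ∏ r, a (x r) (y r)) = 4 * ∑ i, ∑ j, a i j ^ 3 := by
  have h_diag : rookSum (k := 2) (fun x y ↦ (∏ r, a (x r) (y r)) * a (x 1) (y 1)) =
      ∑ i, ∑ j, a i j ^ 3 := by
    rw [← ha.rookSum_pow_mul 2]
    refine congrArg rookSum (funext₂ fun x y ↦ ?_)
    rw [Fin.prod_univ_two]
    ring
  have h_offDiag : rookSum (k := 2) (fun x y ↦ (∏ r, a (x r) (y r)) * a (x 1) (y 0)) =
      ∑ i, ∑ j, a i j ^ 3 := by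
    rw [← ha.rookSum_mul_pow_mul 1]
    refine congrArg rookSum (funext₂ fun x y ↦ ?_)
    rw [Fin.prod_univ_two]
    ring
  rw [ha.rookSum_prod_succ (show (1 : Fin 2) ≠ 0 by decide), h_diag, h_offDiag]
  push_cast
  ring

theorem rookSum_sq_mul_mul (ha : IsDoublyCentered a) :
    rookSum (k := 3) (fun x y ↦ a (x 2) (y 2) ^ 2 * a (x 1) (y 1) * a (x 0) (y 0)) =
      (∑ i, ∑ j, a i j ^ 2) ^ 2 - 2 * ∑ i, (∑ j, a i j ^ 2) ^ 2 -
        2 * ∑ j, (∑ i, a i j ^ 2) ^ 2 + 4 * ∑ i, ∑ j, a i j ^ 4 := by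
  have h_expand (x : Fin 2 → ι) (y : Fin 2 → κ) :
      a (x 1) (y 1) ^ 2 * a (x 0) (y 0) * ∑ s, ∑ t, a (x s) (y t) =
        a (x 1) (y 1) ^ 2 * a (x 0) (y 0) ^ 2 +
          a (x 1) (y 1) ^ 2 * a (x 1) (y 0) ^ 1 * a (x 0) (y 0) +
          a (x 1) (y 1) ^ 2 * a (x 0) (y 1) ^ 1 * a (x 0) (y 0) +
          a (x 1) (y 1) ^ 3 * a (x 0) (y 0) := by
    simp only [Fin.sum_univ_two]
    ring
  refine (ha.rookSum_succ fun x y ↦ a (x 1) (y 1) ^ 2 * a (x 0) (y 0)).trans ?_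
  simp only [h_expand, rookSum_add, rookSum_sq_mul_sq, ha.rookSum_pow_mul_pow_row_mul,
    ha.rookSum_pow_mul_pow_col_mul, ha.rookSum_pow_mul, ← sq]
  ring

theorem rookSum_mul_mul_mul (ha : IsDoublyCentered a) :
    rookSum (k := 3) (fun x y ↦
        a (x 2) (y 2) * a (x 1) (y 1) * a (x 2) (y 1) * a (x 0) (y 0)) =
      ∑ i, ∑ i', ∑ j, ∑ j', a i j * a i j' * a i' j * a i' j' -
        2 * ∑ i, (∑ j, a i j ^ 2) ^ 2 - 2 * ∑ j, (∑ i, a i j ^ 2) ^ 2 +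
        4 * ∑ i, ∑ j, a i j ^ 4 := by
  have h_swap : rookSum (k := 2) (fun x y ↦ a (x 0) (y 0) ^ 2 * a (x 1) (y 0) * a (x 1) (y 1)) =
      ∑ i, ∑ j, a i j ^ 4 - ∑ j, (∑ i, a i j ^ 2) ^ 2 := by
    have h := ha.rookSum_pow_mul_pow_col_mul 2 1
    rw [← rookSum_comp_perm (Equiv.swap 0 1)] at h
    simpa [← sq] using h
  have h_expand (x : Fin 2 → ι) (y : Fin 2 → κ) :
      a (x 1) (y 1) * a (x 0) (y 0) * a (x 1) (y 0) * ∑ s, ∑ t, a (x s) (y t) =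
        a (x 0) (y 0) ^ 2 * a (x 1) (y 0) * a (x 1) (y 1) +
          a (x 0) (y 0) * a (x 1) (y 1) * a (x 1) (y 0) * a (x 0) (y 1) +
          a (x 1) (y 1) * a (x 1) (y 0) ^ 2 * a (x 0) (y 0) +
          a (x 1) (y 1) ^ 2 * a (x 1) (y 0) ^ 1 * a (x 0) (y 0) := by
    simp only [Fin.sum_univ_two]
    ring
  refine (ha.rookSum_succ fun x y ↦ a (x 1) (y 1) * a (x 0) (y 0) * a (x 1) (y 0)).trans ?_
  simp only [h_expand, rookSum_add, h_swap, rookSum_four_cycle, ha.rookSum_pow_mul_pow_row_mul,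
    ha.rookSum_mul_pow_mul, ← sq]
  ring

theorem rookSum_prod_four (ha : IsDoublyCentered a) :
    rookSum (k := 4) (fun x y ↦ ∏ r, a (x r) (y r)) =
      3 * (∑ i, ∑ j, a i j ^ 2) ^ 2 - 18 * ∑ i, (∑ j, a i j ^ 2) ^ 2 -
        18 * ∑ j, (∑ i, a i j ^ 2) ^ 2 + 36 * ∑ i, ∑ j, a i j ^ 4 +
        6 * ∑ i, ∑ i', ∑ j, ∑ j', a i j * a i j' * a i' j * a i' j' := by
  have h_diag : rookSum (k := 3) (fun x y ↦ (∏ r, a (x r) (y r)) * a (x 2) (y 2)) =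
      rookSum (k := 3) fun x y ↦ a (x 2) (y 2) ^ 2 * a (x 1) (y 1) * a (x 0) (y 0) := by
    refine congrArg rookSum (funext₂ fun x y ↦ ?_)
    rw [Fin.prod_univ_three]
    ring
  have h_offDiag : rookSum (k := 3) (fun x y ↦ (∏ r, a (x r) (y r)) * a (x 2) (y 1)) =
      rookSum (k := 3) fun x y ↦
        a (x 2) (y 2) * a (x 1) (y 1) * a (x 2) (y 1) * a (x 0) (y 0) := by
    refine congrArg rookSum (funext₂ fun x y ↦ ?_)
    rw [Fin.prod_univ_three]
    ring
  rw [ha.rookSum_prod_succ (show (2 : Fin 3) ≠ 1 by decide), h_diag, h_offDiag,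
    ha.rookSum_sq_mul_mul, ha.rookSum_mul_mul_mul]
  push_cast
  ring

end IsDoublyCentered

end RookSum

section PermExp

variable {n k : ℕ}

theorem permExp_add (f g : Equiv.Perm (Fin n) → ℝ) :
    permExp (fun π ↦ f π + g π) = permExp f + permExp g := by
  simp only [permExp, sum_add_distrib, add_div]

theorem permExp_const_mul (c : ℝ) (f : Equiv.Perm (Fin n) → ℝ) :
    permExp (fun π ↦ c * f π) = c * permExp f := by
  simp only [permExp, ← mul_sum, mul_div_assoc]

theorem permExp_comp_embedding (e : Fin k ↪ Fin n) (F : (Fin k → Fin n) → ℝ) :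
    permExp (fun π ↦ F (π ∘ e)) = (∑ f : Fin k ↪ Fin n, F f) / ∏ j ∈ range k, ((n : ℝ) - j) := by
  have := Equiv.Perm.isMultiplyPretransitive (Fin n) k
  have hkn : k ≤ n := by simpa using Fintype.card_le_of_embedding e
  have h_desc : ∏ j ∈ range k, ((n : ℝ) - j) = n.descFactorial k := by
    rw [← descPochhammer_eval_eq_descFactorial, descPochhammer_eval_eq_prod_range]
  have h := card_smul_sum_smul (G := Equiv.Perm (Fin n)) (fun f : Fin k ↪ Fin n ↦ F f) e
  simp only [Fintype.card_embedding_eq, Fintype.card_perm, Fintype.card_fin, nsmul_eq_mul] at h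
  have h_ne : (n.descFactorial k : ℝ) ≠ 0 :=
    Nat.cast_ne_zero.2 (Nat.descFactorial_pos.2 hkn).ne'
  rw [permExp, h_desc, div_eq_div_iff (Nat.cast_ne_zero.2 n.factorial_ne_zero) h_ne, mul_comm,
    mul_comm (∑ _, _)]
  exact h

theorem permExp_sum_embedding (G : (Fin k → Fin n) → (Fin k → Fin n) → ℝ) :
    permExp (fun π ↦ ∑ e : Fin k ↪ Fin n, G e (π ∘ e)) =
      rookSum G / ∏ j ∈ range k, ((n : ℝ) - j) := by
  calc permExp (fun π ↦ ∑ e : Fin k ↪ Fin n, G e (π ∘ e))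
      = ∑ e : Fin k ↪ Fin n, permExp (fun π ↦ G e (π ∘ e)) := by
        simp only [permExp, ← sum_div]
        rw [sum_comm]
    _ = rookSum G / ∏ j ∈ range k, ((n : ℝ) - j) := by
        simp only [fun e : Fin k ↪ Fin n ↦ permExp_comp_embedding e (G e), ← sum_div, rookSum]

theorem permExp_sum_apply (b : Fin n → Fin n → ℝ) :
    permExp (fun π ↦ ∑ i, b i (π i)) = (∑ i, ∑ j, b i j) / n := by
  have h := permExp_sum_embedding (k := 1) fun x y ↦ b (x 0) (y 0)
  simp only [rookSum_one, prod_range_one, Nat.cast_zero, sub_zero] at h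
  rw [← h]
  exact congrArg permExp (funext fun π ↦ (sum_embedding_one fun i ↦ b i (π i)).symm)

end PermExp

namespace IsDoublyCentered

variable {n : ℕ} {a : Fin n → Fin n → ℝ}

theorem permExp_rankT_pow_three (ha : IsDoublyCentered a) (hn : 3 ≤ n) :
    permExp (fun π ↦ rankT a π ^ 3) =
      n / (((n : ℝ) - 1) * ((n : ℝ) - 2)) * ∑ i, ∑ j, a i j ^ 3 := by
  have h_two := permExp_sum_embedding (n := n) (k := 2) fun x y ↦ a (x 1) (y 1) ^ 2 * a (x 0) (y 0)
  have h_three := permExp_sum_embedding (n := n) (k := 3) fun x y ↦ ∏ r, a (x r) (y r)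
  rw [ha.rookSum_pow_mul] at h_two
  rw [ha.rookSum_prod_three] at h_three
  simp only [prod_range_succ, prod_range_zero, Function.comp_apply] at h_two h_three
  simp only [rankT, sum_pow_three_eq_sum_embedding, permExp_add, permExp_const_mul, h_two, h_three,
    permExp_sum_apply fun i j ↦ a i j ^ 3]
  have hn' : (3 : ℝ) ≤ n := by exact_mod_cast hn
  have h0 : (n : ℝ) ≠ 0 := by linarith
  have h1 : (n : ℝ) - 1 ≠ 0 := by linarith
  have h2 : (n : ℝ) - 2 ≠ 0 := by linarith
  push_cast
  field_simp
  ring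

theorem permExp_rankT_pow_four (ha : IsDoublyCentered a) (hn : 4 ≤ n) :
    permExp (fun π ↦ rankT a π ^ 4) =
      3 * ((n : ℝ) ^ 2 - 3 * n + 1) / (n * ((n : ℝ) - 1) * ((n : ℝ) - 2) * ((n : ℝ) - 3)) *
          (∑ i, ∑ j, a i j ^ 2) ^ 2 -
        3 / (((n : ℝ) - 2) * ((n : ℝ) - 3)) *
          (∑ i, (∑ j, a i j ^ 2) ^ 2 + ∑ j, (∑ i, a i j ^ 2) ^ 2) +
        n * ((n : ℝ) + 1) / (((n : ℝ) - 1) * ((n : ℝ) - 2) * ((n : ℝ) - 3)) *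
          ∑ i, ∑ j, a i j ^ 4 +
        6 / (n * ((n : ℝ) - 1) * ((n : ℝ) - 2) * ((n : ℝ) - 3)) *
          ∑ i, ∑ i', ∑ j, ∑ j', a i j * a i j' * a i' j * a i' j' := by
  have h_two := permExp_sum_embedding (n := n) (k := 2) fun x y ↦ a (x 1) (y 1) ^ 3 * a (x 0) (y 0)
  have h_two' := permExp_sum_embedding (n := n) (k := 2)
    fun x y ↦ a (x 1) (y 1) ^ 2 * a (x 0) (y 0) ^ 2
  have h_three := permExp_sum_embedding (n := n) (k := 3)
    fun x y ↦ a (x 2) (y 2) ^ 2 * a (x 1) (y 1) * a (x 0) (y 0)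
  have h_four := permExp_sum_embedding (n := n) (k := 4) fun x y ↦ ∏ r, a (x r) (y r)
  rw [ha.rookSum_pow_mul] at h_two
  rw [rookSum_sq_mul_sq] at h_two'
  rw [ha.rookSum_sq_mul_mul] at h_three
  rw [ha.rookSum_prod_four] at h_four
  simp only [prod_range_succ, prod_range_zero, Function.comp_apply] at h_two h_two' h_three h_four
  simp only [rankT, sum_pow_four_eq_sum_embedding, permExp_add, permExp_const_mul, h_two, h_two',
    h_three, h_four, permExp_sum_apply fun i j ↦ a i j ^ 4]
  have hn' : (4 : ℝ) ≤ n := by exact_mod_cast hn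
  have h0 : (n : ℝ) ≠ 0 := by linarith
  have h1 : (n : ℝ) - 1 ≠ 0 := by linarith
  have h2 : (n : ℝ) - 2 ≠ 0 := by linarith
  have h3 : (n : ℝ) - 3 ≠ 0 := by linarith
  push_cast
  field_simp
  ring

end IsDoublyCentered

section Standardization

variable {n : ℕ} (A : Matrix (Fin n) (Fin n) ℝ)

theorem isDoublyCentered_ctr : IsDoublyCentered (ctr A) := by
  have h_total : ∑ j, ∑ i, A i j = ∑ i, ∑ j, A i j := sum_comm
  constructor
  all_goals
    intro i
    have h_ne : (n : ℝ) ≠ 0 := Nat.cast_ne_zero.2 i.pos.ne'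
    simp only [ctr, sum_add_distrib, sum_sub_distrib, sum_const, card_univ, Fintype.card_fin,
      nsmul_eq_mul, rowMean, colMean, totMean, ← sum_div, h_total]
    field_simp
    ring

theorem isDoublyCentered_hatM : IsDoublyCentered (hatM A) where
  row_sum i := by simp only [hatM, ← sum_div, (isDoublyCentered_ctr A).row_sum, zero_div]
  col_sum j := by simp only [hatM, ← sum_div, (isDoublyCentered_ctr A).col_sum, zero_div]

theorem rankT_ctr (π : Equiv.Perm (Fin n)) : rankT (ctr A) π = rankT A π - muM A := by
  rcases n.eq_zero_or_pos with rfl | hn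
  · simp [rankT, muM]
  have h_ne : (n : ℝ) ≠ 0 := Nat.cast_ne_zero.2 hn.ne'
  have h_total : ∑ j, ∑ i, A i j = ∑ i, ∑ j, A i j := sum_comm
  simp only [rankT, ctr, muM, sum_add_distrib, sum_sub_distrib, sum_const, card_univ,
    Fintype.card_fin, nsmul_eq_mul, Equiv.sum_comp π (colMean A)]
  simp only [rowMean, colMean, totMean, ← sum_div, h_total]
  field_simp
  ring

theorem rankTstd_eq_rankT_hatM (π : Equiv.Perm (Fin n)) : rankTstd A π = rankT (hatM A) π := by
  rw [rankTstd, ← rankT_ctr]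
  exact sum_div univ _ _

variable {A}

theorem sum_sum_hatM_sq (hA : 0 < sdev A) : ∑ i, ∑ j, hatM A i j ^ 2 = n - 1 := by
  have h_pos : 0 < sigma2 A := Real.sqrt_pos.1 hA
  have h_ne : (n : ℝ) - 1 ≠ 0 := fun h ↦ h_pos.ne' (by rw [sigma2, h, div_zero])
  simp only [hatM, div_pow, ← sum_div, sdev, Real.sq_sqrt h_pos.le]
  rw [div_eq_iff h_pos.ne', sigma2, mul_div_cancel₀ _ h_ne]

end Standardization

theorem sum_sum_sum_sq_mul_sq_add {ι R : Type*} [Fintype ι] [CommSemiring R] (a : ι → ι → R) :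
    ∑ i, ∑ j, ∑ k, (a i j ^ 2 * a i k ^ 2 + a i j ^ 2 * a k j ^ 2) =
      ∑ i, (∑ j, a i j ^ 2) ^ 2 + ∑ j, (∑ i, a i j ^ 2) ^ 2 := by
  simp only [sum_add_distrib, ← mul_sum, ← sum_mul, ← sq]
  congr 1
  rw [sum_comm]
  simp only [← sum_mul, ← sq]

/-- exact formulas for the third and fourth moments of `𝒯_A`. -/
theorem rank_statistic_third_fourth_moment (n : ℕ) (hn : 2 ≤ n)
    (A : Matrix (Fin n) (Fin n) ℝ) (hA : 0 < sdev A) :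
    (3 ≤ n →
      permExp (fun π => rankTstd A π ^ 3) =
        (n : ℝ) / (((n : ℝ) - 1) * ((n : ℝ) - 2)) * ∑ i, ∑ j, hatM A i j ^ 3) ∧
    (4 ≤ n →
      permExp (fun π => rankTstd A π ^ 4) =
        3 * ((n : ℝ) ^ 2 - 3 * (n : ℝ) + 1) * ((n : ℝ) - 1) /
            ((n : ℝ) * ((n : ℝ) - 2) * ((n : ℝ) - 3))
          - 3 / (((n : ℝ) - 2) * ((n : ℝ) - 3)) *
              ∑ i, ∑ j, ∑ k, (hatM A i j ^ 2 * hatM A i k ^ 2 + hatM A i j ^ 2 * hatM A k j ^ 2)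
          + (n : ℝ) * ((n : ℝ) + 1) / (((n : ℝ) - 1) * ((n : ℝ) - 2) * ((n : ℝ) - 3)) *
              ∑ i, ∑ j, hatM A i j ^ 4
          + 6 / ((n : ℝ) * ((n : ℝ) - 1) * ((n : ℝ) - 2) * ((n : ℝ) - 3)) *
              ∑ i, ∑ j, ∑ k, ∑ h, hatM A i k * hatM A i h * hatM A j k * hatM A j h) := by
  have h_centered := isDoublyCentered_hatM A
  simp only [rankTstd_eq_rankT_hatM]
  refine ⟨h_centered.permExp_rankT_pow_three, fun h_four ↦ ?_⟩
  have h_ne : (n : ℝ) - 1 ≠ 0 := sub_ne_zero.2 (by exact_mod_cast (by omega : n ≠ 1))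
  rw [h_centered.permExp_rankT_pow_four h_four, sum_sum_hatM_sq hA,
    sum_sum_sum_sq_mul_sq_add (hatM A)]
  congr 3
  field_simp
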